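/- The cubic B-spline quasi-interpolant reproduces cubic polynomials: for every polynomial p of degree at most 3 and every x ∈ ℝ, Σ_{k∈ℤ} (1/6)(−p(k−1) + 8p(k) − p(k+1)) · B₃(x − (k−2)) = p(x). -/

import Mathlib

open MeasureTheory

/-- The cardinal B-spline of degree `d`: `B₀` is the indicator function of `[0,1)` and
`B_{d+1} = B_d * B₀` (convolution), so `B_d` is supported on `[0, d+1]`. -/
noncomputable def cardB : ℕ → ℝ → ℝ
  | 0 => Set.indicator (Set.Ico (0 : ℝ) 1) 1
  | (d + 1) => fun x => ∫ t : ℝ, cardB d (x - t) * cardB 0 t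

/-!
Being a `(d + 1)`-st difference of the truncated power `x₊ᵈ / d!`, the B-spline `B_d` inherits from
`x₊ᵈ⁺¹ = x · x₊ᵈ` the recurrence `(d + 1) B_{d+1}(x) = x B_d(x) + (d + 2 - x) B_d(x - 1)`, which
yields Marsden's identity `∑ₖ (k + 1 - y) ⋯ (k + d - y) B_d(x - k) = (x - y)ᵈ` by induction on `d`.
The powers `(X - y)ᵈ` span the polynomials of degree at most `d`, so coefficient functionals
reproduce all of these as soon as they send `(X - y)ᵈ` to the coefficients in Marsden's identity.
For the cubic quasi-interpolant this is
`(-(s - 1)³ + 8 s³ - (s + 1)³) / 6 = (s - 1) s (s + 1)` at `s = k - y`.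
-/

open Polynomial
open scoped fwdDiff

section ForwardDifference

theorem fwdDiff_iter_succ_id_mul {R : Type*} [CommRing R] (h : R) (g : R → R) (n : ℕ) (s : R) :
    (Δ_[h])^[n + 1] (fun t => t * g t) s =
      (s + (n + 1) * h) * (Δ_[h])^[n + 1] g s + (n + 1) * h * (Δ_[h])^[n] g s := by
  induction n generalizing s with
  | zero => simp only [zero_add, Function.iterate_one, Function.iterate_zero_apply, fwdDiff]; grind
  | succ n ih =>
    have iter_succ (m : ℕ) (r : R) :
        (Δ_[h])^[m + 1] g r = (Δ_[h])^[m] g (r + h) - (Δ_[h])^[m] g r := by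
      rw [Function.iterate_succ_apply', fwdDiff]
    rw [Function.iterate_succ_apply', fwdDiff, ih, ih, iter_succ (n + 1), iter_succ n s]
    push_cast
    ring

variable {E : Type*} [NormedAddCommGroup E] [NormedSpace ℝ E]

theorem integral_fwdDiff_iter {f F : ℝ → E} (hf : ∀ a b, IntervalIntegrable f volume a b)
    (hF : ∀ a b, ∫ t in a..b, f t = F b - F a) (h : ℝ) (n : ℕ) (a b : ℝ) :
    ∫ t in a..b, (Δ_[h])^[n] f t = (Δ_[h])^[n] F b - (Δ_[h])^[n] F a := by
  induction n generalizing f F with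
  | zero => exact hF a b
  | succ _ ih =>
    have hf_shift (a b : ℝ) : IntervalIntegrable (fun t => f (t + h)) volume a b := by
      simpa using (hf (a + h) (b + h)).comp_add_right h
    refine ih (fun a b => (hf_shift a b).sub (hf a b)) fun a b => ?_
    simp only [fwdDiff]
    rw [intervalIntegral.integral_sub (hf_shift a b) (hf a b),
      intervalIntegral.integral_comp_add_right, hF, hF]
    abel

end ForwardDifference

/-- The normalized truncated power `x₊ᵈ / d!`. For `d = 0` it is the right-continuous Heaviside
function, so that the B-spline of degree `0` is one of its differences. -/
noncomputable def truncPow (d : ℕ) : ℝ → ℝ :=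
  Set.indicator (Set.Ici 0) fun x => x ^ d / (d.factorial : ℝ)

namespace truncPow

theorem add_one_mul_succ (d : ℕ) (x : ℝ) : (d + 1) * truncPow (d + 1) x = x * truncPow d x := by
  by_cases hx : x ∈ Set.Ici (0 : ℝ)
  · simp only [truncPow, Set.indicator_of_mem hx, Nat.factorial_succ]
    push_cast
    field_simp
    ring
  · simp only [truncPow, Set.indicator_of_notMem hx, mul_zero]

theorem continuous_succ (d : ℕ) : Continuous (truncPow (d + 1)) := by
  refine continuous_indicator (fun x hx => ?_) (by fun_prop)
  rw [frontier_Ici, Set.mem_singleton_iff] at hx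
  simp [hx]

theorem hasDerivAt_succ (d : ℕ) {x : ℝ} (hx : x ≠ 0) :
    HasDerivAt (truncPow (d + 1)) (truncPow d x) x := by
  rcases hx.lt_or_gt with hneg | hpos
  · have eventually_zero : truncPow (d + 1) =ᶠ[nhds x] fun _ => 0 := by
      filter_upwards [Iio_mem_nhds hneg] with t ht
      exact Set.indicator_of_notMem (not_le.mpr ht) _
    have value_zero : truncPow d x = 0 := Set.indicator_of_notMem (not_le.mpr hneg) _
    rw [value_zero]
    exact (hasDerivAt_const x 0).congr_of_eventuallyEq eventually_zero
  · have eventually_pow :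
        truncPow (d + 1) =ᶠ[nhds x] fun t => t ^ (d + 1) / ((d + 1).factorial : ℝ) := by
      filter_upwards [Ioi_mem_nhds hpos] with t ht
      exact Set.indicator_of_mem (Set.mem_Ici.mpr (le_of_lt ht)) _
    have value_pow : truncPow d x = x ^ d / (d.factorial : ℝ) :=
      Set.indicator_of_mem (Set.mem_Ici.mpr hpos.le) _
    refine (((hasDerivAt_pow (d + 1) x).div_const _).congr_of_eventuallyEq
      eventually_pow).congr_deriv ?_
    rw [value_pow, Nat.factorial_succ, Nat.add_sub_cancel]
    push_cast
    field_simp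

theorem intervalIntegrable (d : ℕ) (a b : ℝ) : IntervalIntegrable (truncPow d) volume a b :=
  have pow_integrable : IntervalIntegrable (fun x : ℝ => x ^ d / (d.factorial : ℝ)) volume a b :=
    Continuous.intervalIntegrable (by fun_prop) a b
  ⟨pow_integrable.1.indicator measurableSet_Ici, pow_integrable.2.indicator measurableSet_Ici⟩

theorem integral_eq_sub (d : ℕ) (a b : ℝ) :
    ∫ t in a..b, truncPow d t = truncPow (d + 1) b - truncPow (d + 1) a :=
  integral_eq_of_hasDerivAt_off_countable _ _ (Set.countable_singleton 0)
    (continuous_succ d).continuousOn (fun _ hx => hasDerivAt_succ d hx.2)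
    (intervalIntegrable d a b)

end truncPow

namespace cardB

theorem zero_eq_indicator : cardB 0 = Set.indicator (Set.Ico 0 1) 1 := by rw [cardB]

theorem succ_eq_integral (d : ℕ) (x : ℝ) : cardB (d + 1) x = ∫ t in (x - 1)..x, cardB d t := by
  calc cardB (d + 1) x
      = ∫ t, Set.indicator (Set.Ico 0 1) (fun t => cardB d (x - t)) t := by
        simp only [cardB, Set.indicator_apply, Pi.one_apply, mul_ite, mul_one, mul_zero]
    _ = ∫ t in (0 : ℝ)..1, cardB d (x - t) := by
        rw [integral_indicator measurableSet_Ico, integral_Ico_eq_integral_Ioc,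
          intervalIntegral.integral_of_le zero_le_one]
    _ = ∫ t in (x - 1)..x, cardB d t := by
        rw [intervalIntegral.integral_comp_sub_left, sub_zero]

theorem eq_zero_of_notMem_Ico {d : ℕ} {x : ℝ} (hx : x ∉ Set.Ico (0 : ℝ) (d + 1)) :
    cardB d x = 0 := by
  induction d generalizing x with
  | zero =>
    rw [Nat.cast_zero, zero_add] at hx
    rw [zero_eq_indicator]
    exact Set.indicator_of_notMem hx _
  | succ d ih =>
    rw [succ_eq_integral, intervalIntegral.integral_of_le (by linarith)]
    refine setIntegral_eq_zero_of_forall_eq_zero fun t ht => ih fun ht' => hx ?_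
    push_cast
    exact ⟨by linarith [ht.2, ht'.1], by linarith [ht.1, ht'.2]⟩

theorem eq_fwdDiff_truncPow (d : ℕ) (x : ℝ) :
    cardB d x = (Δ_[1])^[d + 1] (truncPow d) (x - (d + 1)) := by
  induction d generalizing x with
  | zero =>
    simp only [zero_eq_indicator, truncPow, fwdDiff, Set.indicator_apply, Function.iterate_one,
      zero_add, Set.mem_Ico, Set.mem_Ici, Pi.one_apply, Nat.cast_zero, Nat.factorial_zero,
      Nat.cast_one, pow_zero, div_one, sub_add_cancel, sub_nonneg]
    grind
  | succ d ih =>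
    simp only [succ_eq_integral, ih]
    rw [intervalIntegral.integral_comp_sub_right,
      integral_fwdDiff_iter (truncPow.intervalIntegrable d) (truncPow.integral_eq_sub d),
      Function.iterate_succ_apply' _ (d + 1), fwdDiff]
    push_cast
    ring_nf

theorem add_one_mul_succ (d : ℕ) (x : ℝ) :
    (d + 1) * cardB (d + 1) x = x * cardB d x + (d + 2 - x) * cardB d (x - 1) := by
  set s : ℝ := x - (d + 2) with hs
  have lower_left : cardB d (x - 1) = (Δ_[1])^[d + 1] (truncPow d) s := by
    rw [eq_fwdDiff_truncPow, hs]; ring_nf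
  have lower_diff : cardB d x - cardB d (x - 1) = (Δ_[1])^[d + 2] (truncPow d) s := by
    rw [Function.iterate_succ_apply', fwdDiff, lower_left, eq_fwdDiff_truncPow, hs]; ring_nf
  calc (d + 1) * cardB (d + 1) x
      = (d + 1) * (Δ_[1])^[d + 2] (truncPow (d + 1)) s := by
        rw [eq_fwdDiff_truncPow, hs]; push_cast; ring_nf
    _ = (Δ_[1])^[d + 2] (fun t => t * truncPow d t) s := by
        rw [← smul_eq_mul, ← Pi.smul_apply, ← fwdDiff_iter_const_smul]
        exact congrArg (fun f => (Δ_[1])^[d + 2] f s) (funext (truncPow.add_one_mul_succ d))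
    _ = (s + (d + 2)) * (cardB d x - cardB d (x - 1)) + (d + 2) * cardB d (x - 1) := by
        rw [fwdDiff_iter_succ_id_mul, ← lower_diff, ← lower_left]; push_cast; ring
    _ = x * cardB d x + (d + 2 - x) * cardB d (x - 1) := by rw [hs]; ring

theorem summable_mul_shift (d : ℕ) (c : ℤ → ℝ) (x : ℝ) :
    Summable fun k : ℤ => c k * cardB d (x - k) := by
  refine summable_of_hasFiniteSupport ((Set.finite_Icc ⌊x - (d + 1)⌋ ⌈x⌉).subset ?_)
  intro k hk
  obtain ⟨hk_left, hk_right⟩ := not_not.mp (mt eq_zero_of_notMem_Ico (right_ne_zero_of_mul hk))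
  exact ⟨Int.floor_le_iff.mpr (by linarith), Int.le_ceil_iff.mpr (by linarith)⟩

theorem tsum_mul_succ_shift (d : ℕ) (c : ℤ → ℝ) (x : ℝ) :
    (d + 1) * ∑' k : ℤ, c k * cardB (d + 1) (x - k) =
      ∑' k : ℤ, (c k * (x - k) + c (k - 1) * (d + 1 - (x - k))) * cardB d (x - k) := by
  set left : ℤ → ℝ := fun k => c k * (x - k) * cardB d (x - k) with hleft
  set right : ℤ → ℝ := fun k => c (k - 1) * (d + 1 - (x - k)) * cardB d (x - k) with hright
  have left_summable : Summable left := summable_mul_shift d _ x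
  have right_summable : Summable right := summable_mul_shift d _ x
  have right_shift_summable : Summable fun k => right (k + 1) :=
    (Equiv.addRight (1 : ℤ)).summable_iff.mpr right_summable
  calc (d + 1) * ∑' k : ℤ, c k * cardB (d + 1) (x - k)
      = ∑' k : ℤ, (left k + right (k + 1)) := by
        rw [← tsum_mul_left]
        refine tsum_congr fun k => ?_
        rw [mul_left_comm, add_one_mul_succ, hleft, hright]
        simp only [add_sub_cancel_right]
        push_cast
        ring_nf
    _ = ∑' k, left k + ∑' k, right (k + 1) := left_summable.tsum_add right_shift_summable
    _ = ∑' k, left k + ∑' k, right k := congrArg (∑' k, left k + ·) <|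
        (Equiv.addRight (1 : ℤ)).tsum_eq right
    _ = ∑' k, (left k + right k) := (left_summable.tsum_add right_summable).symm
    _ = _ := tsum_congr fun k => (add_mul _ _ _).symm

theorem tsum_zero_shift (x : ℝ) : ∑' k : ℤ, cardB 0 (x - k) = 1 := by
  have only_floor (k : ℤ) (hk : k ≠ ⌊x⌋) : cardB 0 (x - k) = 0 := by
    refine eq_zero_of_notMem_Ico fun hmem => hk (Int.floor_eq_iff.mpr ?_).symm
    rw [Nat.cast_zero, zero_add] at hmem
    exact ⟨by linarith [hmem.1], by linarith [hmem.2]⟩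
  rw [tsum_eq_single ⌊x⌋ only_floor, zero_eq_indicator]
  exact Set.indicator_of_mem (Set.mem_Ico.mpr ⟨Int.fract_nonneg x, Int.fract_lt_one x⟩) _

theorem marsden_identity (d : ℕ) (x y : ℝ) :
    ∑' k : ℤ, (ascPochhammer ℝ d).eval (k + 1 - y) * cardB d (x - k) = (x - y) ^ d := by
  induction d with
  | zero => simpa using tsum_zero_shift x
  | succ d ih =>
    have coeff_recurrence (k : ℤ) :
        (ascPochhammer ℝ (d + 1)).eval (k + 1 - y) * (x - k) +
            (ascPochhammer ℝ (d + 1)).eval (((k - 1 : ℤ) : ℝ) + 1 - y) * (d + 1 - (x - k)) =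
          (d + 1) * (x - y) * (ascPochhammer ℝ d).eval (k + 1 - y) := by
      have shifted : (ascPochhammer ℝ (d + 1)).eval (((k - 1 : ℤ) : ℝ) + 1 - y) =
          (k - y) * (ascPochhammer ℝ d).eval (k + 1 - y) := by
        simp only [ascPochhammer_succ_left, eval_mul, eval_X, eval_comp, eval_add, eval_one]
        push_cast
        ring_nf
      rw [shifted, ascPochhammer_succ_eval]
      ring
    refine mul_left_cancel₀ (Nat.cast_add_one_ne_zero (R := ℝ) d) ?_
    rw [tsum_mul_succ_shift d fun k : ℤ => (ascPochhammer ℝ (d + 1)).eval (k + 1 - y)]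
    simp only [coeff_recurrence, mul_assoc, tsum_mul_left, ih]
    rw [pow_succ']

end cardB

theorem degreeLE_le_span_X_sub_C_pow (K : Type*) [Field K] [CharZero K] (d : ℕ) :
    degreeLE K d ≤ Submodule.span K (Set.range fun y : K => (X - C y) ^ d) := by
  intro p hp
  let node : Fin (d + 1) → K := fun i => -(i : K)
  have node_injective : Function.Injective node := fun i j hij =>
    Fin.ext (Nat.cast_injective (neg_injective hij))
  have vandermonde_isUnit : IsUnit (Matrix.vandermonde node) :=
    (Matrix.isUnit_iff_isUnit_det _).mpr
      (isUnit_iff_ne_zero.mpr (Matrix.det_vandermonde_ne_zero_iff.mpr node_injective))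
  obtain ⟨c, hc⟩ := Matrix.vecMul_surjective_iff_isUnit.mpr vandermonde_isUnit
    fun r => p.coeff (d - r) / (d.choose (d - r) : K)
  have p_eq : p = ∑ i, c i • (X + C (node i)) ^ d := by
    ext j
    simp only [finsetSum_coeff, coeff_smul, coeff_X_add_C_pow, smul_eq_mul]
    rcases le_or_gt j d with hj | hj
    · have moment : ∑ i, c i * node i ^ (d - j) = p.coeff j / (d.choose j : K) := by
        simpa [Matrix.vecMul, dotProduct, Nat.sub_sub_self hj] using
          congrFun hc ⟨d - j, by lia⟩
      have choose_ne_zero : (d.choose j : K) ≠ 0 := by exact_mod_cast (Nat.choose_pos hj).ne'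
      simp only [← mul_assoc, ← Finset.sum_mul]
      rw [moment, div_mul_cancel₀ _ choose_ne_zero]
    · simp [Nat.choose_eq_zero_of_lt hj,
        coeff_eq_zero_of_degree_lt ((mem_degreeLE.mp hp).trans_lt (by exact_mod_cast hj))]
  rw [p_eq]
  exact Submodule.sum_smul_mem _ _ fun i _ =>
    Submodule.subset_span ⟨i, by simp [node, sub_eq_add_neg]⟩

theorem tsum_mul_cardB_eq_eval_of_marsden {d : ℕ} {coeffFun : ℤ → ℝ[X] →ₗ[ℝ] ℝ}
    (hcoeff : ∀ (k : ℤ) (y : ℝ),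
      coeffFun k ((X - C y) ^ d) = (ascPochhammer ℝ d).eval (k + 1 - y))
    {p : ℝ[X]} (hp : p.degree ≤ d) (x : ℝ) :
    ∑' k : ℤ, coeffFun k p * cardB d (x - k) = p.eval x := by
  have hspan := degreeLE_le_span_X_sub_C_pow ℝ d (mem_degreeLE.mpr hp)
  clear hp
  induction hspan using Submodule.span_induction with
  | mem q hq =>
    obtain ⟨y, rfl⟩ := hq
    simp only [hcoeff, cardB.marsden_identity, eval_pow, eval_sub, eval_X, eval_C]
  | zero => simp
  | add q r _ _ hq hr =>
    simp only [map_add, add_mul, eval_add]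
    rw [(cardB.summable_mul_shift d _ x).tsum_add (cardB.summable_mul_shift d _ x), hq, hr]
  | smul a q _ hq => simp only [map_smul, smul_eq_mul, mul_assoc, tsum_mul_left, hq, eval_smul]

/-- The functional `p ↦ (-p(s - 1) + 8 p(s) - p(s + 1)) / 6` giving the coefficient of the B-spline
centred at `s` in the cubic quasi-interpolant of `p`. -/
noncomputable def cbsqiCoeff (s : ℝ) : ℝ[X] →ₗ[ℝ] ℝ :=
  (1 / 6 : ℝ) • (-leval (s - 1) + (8 : ℝ) • leval s - leval (s + 1))

theorem cbsqiCoeff_apply (s : ℝ) (p : ℝ[X]) :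
    cbsqiCoeff s p = 1 / 6 * (-p.eval (s - 1) + 8 * p.eval s - p.eval (s + 1)) :=
  rfl

theorem cbsqiCoeff_X_sub_C_pow_three (s y : ℝ) :
    cbsqiCoeff s ((X - C y) ^ 3) = (ascPochhammer ℝ 3).eval (s - 1 - y) := by
  simp only [cbsqiCoeff_apply, eval_pow, eval_sub, eval_X, eval_C, ascPochhammer_succ_eval,
    ascPochhammer_zero, eval_one]
  push_cast
  ring

/-- The cubic B-spline quasi-interpolant reproduces cubic polynomials. -/
theorem cbsqi_reproduces_cubics (p : Polynomial ℝ) (hp : p.degree ≤ 3) (x : ℝ) :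
    ∑' k : ℤ, (1 / 6 : ℝ) * (-(p.eval ((k : ℝ) - 1)) + 8 * p.eval (k : ℝ)
        - p.eval ((k : ℝ) + 1)) * cardB 3 (x - ((k : ℝ) - 2)) = p.eval x := by
  have marsden_coeff (k : ℤ) (y : ℝ) :
      cbsqiCoeff (k + 2) ((X - C y) ^ 3) = (ascPochhammer ℝ 3).eval (k + 1 - y) := by
    rw [cbsqiCoeff_X_sub_C_pow_three]
    ring_nf
  calc ∑' k : ℤ, cbsqiCoeff k p * cardB 3 (x - ((k : ℝ) - 2))
      = ∑' k : ℤ, cbsqiCoeff (k + 2) p * cardB 3 (x - k) := by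
        rw [← (Equiv.addRight (2 : ℤ)).tsum_eq]
        simp
    _ = p.eval x := tsum_mul_cardB_eq_eval_of_marsden marsden_coeff hp x
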